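/- arXiv:2303.09505 — 4 statements merged into one kernel-verified Lean document; each statement's English description precedes it below -/
import Mathlib

section
/- Assume V = V*, B_r = A_r* for all r, A_R is invertible, and E ∈ ℝ. Then for every nonzero λ₀ ∈ ℂ and every m ≥ 1: λ₀ is a root of multiplicity m of the characteristic polynomial of the companion matrix C_E if and only if 1/conj(λ₀) is a root of multiplicity m. In particular, λ₀ is an eigenvalue of C_E iff 1/conj(λ₀) is, and in that case E is an eigenvalue of both Bloch Hamiltonians 𝐇(λ₀) and 𝐇(1/conj(λ₀)). -/
/-!
STATEMENT 4 (mode duality from self-adjointness).  For a self-adjoint Hamiltonian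
(`V = V*`, `B_r = A_r*`) with `A_R` invertible and real energy `E`: a nonzero `λ₀`
is a root of multiplicity `m ≥ 1` of the characteristic polynomial of the companion
matrix `C_E` iff `1/conj(λ₀)` is; in particular `λ₀` is an eigenvalue of `C_E` iff
`1/conj(λ₀)` is, and then `E` is an eigenvalue of both `𝐇(λ₀)` and `𝐇(1/conj(λ₀))`.
-/

open Matrix Finset

/-- The Bloch Hamiltonian `𝐇(λ) = V + ∑_{r=1}^R (λ^{−r}·B_r + λ^r·A_r)`. -/
noncomputable def bloch (R d : ℕ) (V : Matrix (Fin d) (Fin d) ℂ)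
    (A B : ℕ → Matrix (Fin d) (Fin d) ℂ) (z : ℂ) : Matrix (Fin d) (Fin d) ℂ :=
  V + ∑ r ∈ Finset.Icc 1 R, (z⁻¹ ^ r • B r + z ^ r • A r)

/-- The `j`-th block (0-indexed, `j = 0, …, 2R−1`) of the last block row of the
companion matrix: `(−A_R⁻¹ B_R, …, −A_R⁻¹ B_1, −A_R⁻¹ V_E, −A_R⁻¹ A_1, …, −A_R⁻¹ A_{R−1})`. -/
noncomputable def companionLastRow (R d : ℕ) (V : Matrix (Fin d) (Fin d) ℂ)
    (A B : ℕ → Matrix (Fin d) (Fin d) ℂ) (E : ℂ) (j : ℕ) : Matrix (Fin d) (Fin d) ℂ :=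
  if j < R then -((A R)⁻¹ * B (R - j))
  else if j = R then -((A R)⁻¹ * (V - E • (1 : Matrix (Fin d) (Fin d) ℂ)))
  else -((A R)⁻¹ * A (j - R))

/-- The companion matrix `C_E ∈ M_{2Rd}(ℂ)`, realized as a matrix indexed by
`Fin (2R) × Fin d` (block index × intra-block index): the `(i, i+1)` blocks are `1_d`
for `i = 0, …, 2R−2`, the last block row is `companionLastRow`, all other blocks `0`. -/
noncomputable def companion (R d : ℕ) (V : Matrix (Fin d) (Fin d) ℂ)
    (A B : ℕ → Matrix (Fin d) (Fin d) ℂ) (E : ℂ) :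
    Matrix (Fin (2 * R) × Fin d) (Fin (2 * R) × Fin d) ℂ :=
  fun p q =>
    if (p.1 : ℕ) + 1 = 2 * R then companionLastRow R d V A B E (q.1 : ℕ) p.2 q.2
    else if (q.1 : ℕ) = (p.1 : ℕ) + 1 then (1 : Matrix (Fin d) (Fin d) ℂ) p.2 q.2
    else 0

/-!
Eliminating the first block of the unknown by a Schur complement turns `w - C_E`, for `w ≠ 0`, into
a block companion matrix with one block fewer; after `2R - 1` such steps the determinant collapses
to that of the matrix polynomial attached to the last block row. For the row at hand this reads
`det A_R · χ_{C_E}(w) = (-w ^ R) ^ d · χ_{𝐇(w)}(E)`, where `χ` is the characteristic polynomial.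
Since `𝐇(w)*` is the Bloch Hamiltonian of the adjoint coefficients at `1 / conj w`, conjugating this
identity shows that the conjugate reciprocal polynomial of `χ_{C_E}` is a nonzero multiple of the
characteristic polynomial of the companion matrix of the adjoint coefficients at energy `conj E`;
for self-adjoint coefficients and real `E` it is a multiple of `χ_{C_E}` itself.
-/

section Charpoly

theorem exists_mulVec_eq_smul_iff_isRoot_charpoly {K ι : Type*} [CommRing K] [IsDomain K]
    [Fintype ι] [DecidableEq ι] (M : Matrix ι ι K) (μ : K) :
    (∃ x : ι → K, x ≠ 0 ∧ M *ᵥ x = μ • x) ↔ M.charpoly.IsRoot μ := by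
  rw [Polynomial.IsRoot.def, eval_charpoly, ← exists_mulVec_eq_zero_iff]
  simp only [sub_mulVec, scalar_apply, ← smul_one_eq_diagonal, smul_mulVec, one_mulVec,
    sub_eq_zero, eq_comm]

theorem charpoly_conjTranspose {K ι : Type*} [CommRing K] [StarRing K] [Fintype ι]
    [DecidableEq ι] (M : Matrix ι ι K) :
    Mᴴ.charpoly = M.charpoly.map (starRingEnd K) := by
  rw [← charpoly_transpose M, ← charpoly_map]
  rfl

end Charpoly

section RootMultiplicity

open Polynomial

theorem rootMultiplicity_C_mul {K : Type*} [CommRing K] [IsDomain K] {a : K} (ha : a ≠ 0)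
    (p : K[X]) (x : K) : (C a * p).rootMultiplicity x = p.rootMultiplicity x := by
  rcases eq_or_ne p 0 with rfl | hp
  · rw [mul_zero]
  · rw [rootMultiplicity_mul (mul_ne_zero (C_ne_zero.mpr ha) hp), rootMultiplicity_C, zero_add]

theorem reverse_pow {K : Type*} [Semiring K] [NoZeroDivisors K] (p : K[X]) (n : ℕ) :
    (p ^ n).reverse = p.reverse ^ n := by
  induction n with
  | zero => rw [pow_zero, pow_zero, ← C_1, reverse_C]
  | succ n ih => rw [pow_succ, pow_succ, reverse_mul_of_domain, ih]

/-- The conjugate reciprocal `X ^ n * conj p (1 / X)`, `n = deg p`, of a polynomial `p`: its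
nonzero roots are the reflections `1 / conj z` of those of `p`. -/
noncomputable def conjReverse {K : Type*} [CommSemiring K] [StarRing K] (p : K[X]) : K[X] :=
  (p.map (starRingEnd K)).reverse

variable {K : Type*} [Field K]

theorem eval_reverse (p : K[X]) {x : K} (hx : x ≠ 0) :
    p.reverse.eval x = x ^ p.natDegree * p.eval x⁻¹ := by
  let _ := invertibleOfNonzero (inv_ne_zero hx)
  have h := eval₂_reverse_mul_pow (RingHom.id K) x⁻¹ p
  rw [invOf_eq_inv, inv_inv, eval₂_id, eval₂_id, inv_pow] at h
  rw [← h, mul_comm, inv_mul_cancel_right₀ (pow_ne_zero _ hx)]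

theorem reverse_X_sub_C {x : K} (hx : x ≠ 0) :
    (X - C x).reverse = C (-x) * (X - C x⁻¹) := by
  have reverse_X : (X : K[X]).reverse = 1 := by
    rw [← one_mul X, reverse_mul_X, ← C_1, reverse_C]
  rw [sub_eq_add_neg, ← C_neg, reverse_add_C, reverse_X, natDegree_X, pow_one, mul_sub, ← C_mul,
    neg_mul, mul_inv_cancel₀ hx, C_neg, C_neg, C_1]
  ring

theorem rootMultiplicity_inv_reverse (p : K[X]) {x : K} (hx : x ≠ 0) :
    p.reverse.rootMultiplicity x⁻¹ = p.rootMultiplicity x := by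
  rcases eq_or_ne p 0 with rfl | hp
  · simp
  obtain ⟨q, hpq, hq⟩ := exists_eq_pow_rootMultiplicity_mul_and_not_dvd p hp x
  set m := p.rootMultiplicity x
  have hq_root : ¬ q.reverse.IsRoot x⁻¹ := by
    rw [IsRoot.def, eval_reverse q (inv_ne_zero hx), inv_inv]
    exact mul_ne_zero (pow_ne_zero _ (inv_ne_zero hx)) (mt dvd_iff_isRoot.mpr hq)
  have hq_reverse : q.reverse ≠ 0 := fun h => hq_root (by simp [h])
  rw [hpq, reverse_mul_of_domain, reverse_pow, reverse_X_sub_C hx, mul_pow, ← C_pow, mul_assoc,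
    rootMultiplicity_C_mul (pow_ne_zero _ (neg_ne_zero.mpr hx)),
    rootMultiplicity_mul (mul_ne_zero (pow_ne_zero _ (X_sub_C_ne_zero _)) hq_reverse),
    rootMultiplicity_X_sub_C_pow, rootMultiplicity_eq_zero hq_root, add_zero]

variable [StarRing K]

theorem eval_conjReverse (p : K[X]) {x : K} (hx : x ≠ 0) :
    (conjReverse p).eval x = x ^ p.natDegree * starRingEnd K (p.eval (starRingEnd K x)⁻¹) := by
  rw [conjReverse, eval_reverse _ hx, natDegree_map, ← eval_map_apply, map_inv₀,
    starRingEnd_self_apply]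

theorem rootMultiplicity_conjReverse (p : K[X]) {x : K} (hx : x ≠ 0) :
    (conjReverse p).rootMultiplicity (starRingEnd K x)⁻¹ = p.rootMultiplicity x := by
  have hx' : starRingEnd K x ≠ 0 := star_ne_zero.mpr hx
  rw [conjReverse, rootMultiplicity_inv_reverse _ hx',
    ← eq_rootMultiplicity_map (starRingEnd K).injective]

end RootMultiplicity

section BlockCompanion

variable {K ι : Type*}

/-- Splits off the first of `n + 1` blocks of indices. -/
def splitFirstBlock (n : ℕ) (ι : Type*) : Fin (n + 1) × ι ≃ ι ⊕ Fin n × ι :=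
  ((finSuccEquiv n).prodCongr (Equiv.refl ι)).trans optionProdEquiv

@[simp]
theorem splitFirstBlock_symm_inl (n : ℕ) (a : ι) :
    (splitFirstBlock n ι).symm (Sum.inl a) = (0, a) := rfl

@[simp]
theorem splitFirstBlock_symm_inr (n : ℕ) (p : Fin n × ι) :
    (splitFirstBlock n ι).symm (Sum.inr p) = (p.1.succ, p.2) := rfl

variable [CommRing K] [DecidableEq ι]

/-- The `N × N` block companion matrix of the monic matrix polynomial `Xᴺ - ∑ j < N, Xʲ • c j`.
Its last block row is `c 0, …, c (N - 1)`; the values of `c` beyond `N - 1` are irrelevant. -/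
def blockCompanion (N : ℕ) (c : ℕ → Matrix ι ι K) : Matrix (Fin N × ι) (Fin N × ι) K :=
  fun p q =>
    if (p.1 : ℕ) + 1 = N then c q.1 p.2 q.2
    else if (q.1 : ℕ) = p.1 + 1 then (1 : Matrix ι ι K) p.2 q.2
    else 0

/-- The block row `(1, 0, …, 0)`. -/
def firstUnitBlockRow (n : ℕ) : Matrix ι (Fin (n + 1) × ι) K :=
  of fun a q => if q.1 = 0 then (1 : Matrix ι ι K) a q.2 else 0

/-- The block column `(0, …, 0, X)ᵀ`. -/
def lastBlockColumn (n : ℕ) (X : Matrix ι ι K) : Matrix (Fin (n + 1) × ι) ι K :=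
  of fun p b => if (p.1 : ℕ) = n then X p.2 b else 0

/-- The coefficients left after eliminating the first block of the unknown `x` from
`blockCompanion N c *ᵥ x = w • x`: the term `c 0`, divided by `w`, is absorbed into `c 1`. -/
def absorbFirst (w : K) [Invertible w] (c : ℕ → Matrix ι ι K) : ℕ → Matrix ι ι K
  | 0 => c 1 + ⅟w • c 0
  | j + 1 => c (j + 2)

theorem blockCompanion_submatrix_splitFirstBlock (n : ℕ) (c : ℕ → Matrix ι ι K) :
    (blockCompanion (n + 2) c).submatrix (splitFirstBlock (n + 1) ι).symm
        (splitFirstBlock (n + 1) ι).symm =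
      fromBlocks 0 (firstUnitBlockRow n) (lastBlockColumn n (c 0))
        (blockCompanion (n + 1) fun j => c (j + 1)) := by
  ext (a | ⟨i, a⟩) (b | ⟨j, b⟩) <;>
    simp only [submatrix_apply, splitFirstBlock_symm_inl, splitFirstBlock_symm_inr] <;>
    simp [blockCompanion, firstUnitBlockRow, lastBlockColumn]

theorem smul_sub_sum_absorbFirst (w : K) [Invertible w] (c : ℕ → Matrix ι ι K) (n : ℕ) :
    w • (w ^ (n + 1) • (1 : Matrix ι ι K) - ∑ j ∈ range (n + 1), w ^ j • absorbFirst w c j) =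
      w ^ (n + 2) • 1 - ∑ j ∈ range (n + 2), w ^ j • c j := by
  simp only [sum_range_succ', absorbFirst, smul_sub, smul_add, smul_sum, smul_smul, ← pow_succ',
    pow_zero, one_mul, mul_invOf_self, one_smul, zero_add, pow_one, add_assoc,
    Nat.reduceAdd]

variable [Fintype ι]

theorem blockCompanion_absorbFirst (w : K) [Invertible w] (n : ℕ) (c : ℕ → Matrix ι ι K) :
    blockCompanion (n + 1) (absorbFirst w c) =
      (blockCompanion (n + 1) fun j => c (j + 1)) +
        ⅟w • (lastBlockColumn n (c 0) * (firstUnitBlockRow n : Matrix ι _ K)) := by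
  ext ⟨i, a⟩ ⟨j, b⟩
  rcases j.eq_zero_or_eq_succ with rfl | ⟨j, rfl⟩ <;> by_cases hi : (i : ℕ) = n <;>
    simp [mul_apply, one_apply, blockCompanion, absorbFirst, firstUnitBlockRow, lastBlockColumn, hi]

theorem det_smul_one_sub_blockCompanion_succ (w : K) [Invertible w] (n : ℕ)
    (c : ℕ → Matrix ι ι K) :
    (w • 1 - blockCompanion (n + 2) c).det =
      (w • (1 : Matrix ι ι K)).det * (w • 1 - blockCompanion (n + 1) (absorbFirst w c)).det := by
  have hblocks : (w • 1 - blockCompanion (n + 2) c).submatrix (splitFirstBlock (n + 1) ι).symm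
      (splitFirstBlock (n + 1) ι).symm =
      fromBlocks (w • 1) (-firstUnitBlockRow n) (-lastBlockColumn n (c 0))
        (w • 1 - blockCompanion (n + 1) fun j => c (j + 1)) := by
    rw [submatrix_sub, Pi.sub_apply, Pi.sub_apply, blockCompanion_submatrix_splitFirstBlock,
      submatrix_smul, Pi.smul_apply, Pi.smul_apply, submatrix_one_equiv, ← fromBlocks_one,
      fromBlocks_smul, sub_eq_add_neg, fromBlocks_neg, fromBlocks_add]
    simp only [smul_zero, neg_zero, add_zero, zero_add, sub_eq_add_neg]
  let _ : Invertible (w • (1 : Matrix ι ι K)) :=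
    ⟨⅟w • 1, by simp, by simp⟩
  have hinv : ⅟(w • (1 : Matrix ι ι K)) = ⅟w • 1 := rfl
  rw [← det_submatrix_equiv_self (splitFirstBlock (n + 1) ι).symm, hblocks, det_fromBlocks₁₁,
    hinv, blockCompanion_absorbFirst, sub_add_eq_sub_sub]
  simp only [Matrix.mul_smul, Matrix.smul_mul, Matrix.mul_one, Matrix.neg_mul, Matrix.mul_neg,
    smul_neg, neg_neg]

theorem det_smul_one_sub_blockCompanion (w : K) [Invertible w] :
    ∀ (N : ℕ) (c : ℕ → Matrix ι ι K), (w • 1 - blockCompanion N c).det =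
      (w ^ N • (1 : Matrix ι ι K) - ∑ j ∈ range N, w ^ j • c j).det
  | 0, c => by simp
  | 1, c => by
    rw [← det_submatrix_equiv_self (Equiv.uniqueProd ι (Fin 1)).symm]
    congr 1
    ext a b
    simp [blockCompanion, one_apply]
  | n + 2, c => by
    rw [det_smul_one_sub_blockCompanion_succ, det_smul_one_sub_blockCompanion w (n + 1),
      ← smul_sub_sum_absorbFirst, ← det_mul, smul_one_mul]

end BlockCompanion

section Bloch

open Polynomial

theorem sum_range_pow_smul_sub {K M : Type*} [DivisionSemiring K] [AddCommMonoid M]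
    [Module K M] {w : K} (hw : w ≠ 0) (R : ℕ) (b : ℕ → M) :
    ∑ j ∈ range R, w ^ j • b (R - j) = w ^ R • ∑ r ∈ Icc 1 R, w⁻¹ ^ r • b r := by
  rw [smul_sum]
  refine sum_nbij' (R - ·) (R - ·) ?_ ?_ ?_ ?_ fun j hj => ?_
  any_goals intro j hj; simp only [mem_range, mem_Icc] at hj ⊢; omega
  rw [smul_smul, inv_pow, ← pow_sub₀ w hw (Nat.sub_le R j), Nat.sub_sub_self (mem_range.mp hj).le]

variable {R d : ℕ} {V : Matrix (Fin d) (Fin d) ℂ} {A B : ℕ → Matrix (Fin d) (Fin d) ℂ}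

theorem mul_sum_companionLastRow_lower (hAR : IsUnit (A R).det) (E : ℂ) {w : ℂ} (hw : w ≠ 0) :
    A R * ∑ j ∈ range R, w ^ j • companionLastRow R d V A B E j =
      -(w ^ R • ∑ r ∈ Icc 1 R, w⁻¹ ^ r • B r) := by
  rw [← sum_range_pow_smul_sub hw, mul_sum, ← sum_neg_distrib]
  refine sum_congr rfl fun j hj => ?_
  rw [companionLastRow, if_pos (mem_range.mp hj), Matrix.mul_smul, Matrix.mul_neg,
    mul_nonsing_inv_cancel_left _ _ hAR, smul_neg]

theorem mul_sum_companionLastRow_upper (hR : 1 ≤ R) (hAR : IsUnit (A R).det) (E w : ℂ) :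
    A R * ∑ j ∈ range R, w ^ j • companionLastRow R d V A B E (R + j) =
      w ^ R • A R - (V - E • 1 + ∑ r ∈ Icc 1 R, w ^ r • A r) := by
  have hmid : A R * companionLastRow R d V A B E R = -(V - E • 1) := by
    rw [companionLastRow, if_neg (lt_irrefl R), if_pos rfl, Matrix.mul_neg,
      mul_nonsing_inv_cancel_left _ _ hAR]
  have hhigh (r : ℕ) (hr : 1 ≤ r) : A R * companionLastRow R d V A B E (R + r) = -A r := by
    rw [companionLastRow, if_neg (by omega), if_neg (by omega), Nat.add_sub_cancel_left,
      Matrix.mul_neg, mul_nonsing_inv_cancel_left _ _ hAR]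
  have hIco : ∑ r ∈ Ico 1 R, A R * w ^ r • companionLastRow R d V A B E (R + r) =
      -∑ r ∈ Ico 1 R, w ^ r • A r := by
    rw [← sum_neg_distrib]
    refine sum_congr rfl fun r hr => ?_
    rw [Matrix.mul_smul, hhigh r (mem_Ico.mp hr).1, smul_neg]
  rw [mul_sum, range_eq_Ico, sum_eq_sum_Ico_succ_bot hR, hIco, pow_zero, one_smul, add_zero, hmid,
    ← Ico_insert_right hR, sum_insert right_notMem_Ico]
  abel

theorem mul_pow_smul_one_sub_sum_companionLastRow (hR : 1 ≤ R) (hAR : IsUnit (A R).det) (E : ℂ)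
    {w : ℂ} (hw : w ≠ 0) :
    A R * (w ^ (2 * R) • 1 - ∑ j ∈ range (2 * R), w ^ j • companionLastRow R d V A B E j) =
      w ^ R • (bloch R d V A B w - E • 1) := by
  rw [two_mul, sum_range_add, mul_sub, mul_add, mul_sum_companionLastRow_lower hAR E hw]
  simp only [pow_add, mul_smul, ← smul_sum, Matrix.mul_smul, Matrix.mul_one,
    mul_sum_companionLastRow_upper hR hAR, bloch, sum_add_distrib]
  module

theorem det_mul_charpoly_companion_eval (hR : 1 ≤ R) (hAR : IsUnit (A R).det) (E : ℂ) {w : ℂ}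
    (hw : w ≠ 0) :
    (A R).det * (companion R d V A B E).charpoly.eval w =
      (-w ^ R) ^ d * (bloch R d V A B w).charpoly.eval E := by
  let _ := invertibleOfNonzero hw
  have hcompanion : companion R d V A B E = blockCompanion (2 * R) (companionLastRow R d V A B E) :=
    rfl
  rw [eval_charpoly, scalar_apply, ← smul_one_eq_diagonal, hcompanion,
    det_smul_one_sub_blockCompanion, ← det_mul,
    mul_pow_smul_one_sub_sum_companionLastRow hR hAR E hw, eval_charpoly, scalar_apply,
    ← smul_one_eq_diagonal, ← neg_sub, smul_neg, ← neg_smul, det_smul, Fintype.card_fin]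

theorem isRoot_charpoly_companion_iff (hR : 1 ≤ R) (hAR : IsUnit (A R).det) (E : ℂ) {w : ℂ}
    (hw : w ≠ 0) :
    (companion R d V A B E).charpoly.IsRoot w ↔ (bloch R d V A B w).charpoly.IsRoot E := by
  have h := det_mul_charpoly_companion_eval (V := V) (B := B) hR hAR E hw
  rw [IsRoot.def, IsRoot.def, ← mul_eq_zero_iff_left hAR.ne_zero, h,
    mul_eq_zero_iff_left (pow_ne_zero _ (neg_ne_zero.mpr (pow_ne_zero _ hw)))]

theorem natDegree_charpoly_companion (E : ℂ) :
    (companion R d V A B E).charpoly.natDegree = 2 * R * d := by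
  rw [charpoly_natDegree_eq_dim, Fintype.card_prod, Fintype.card_fin, Fintype.card_fin]

section Adjoint

variable {V' : Matrix (Fin d) (Fin d) ℂ} {A' B' : ℕ → Matrix (Fin d) (Fin d) ℂ}

theorem bloch_adjoint (hV : V' = Vᴴ) (hA : ∀ r, A' r = (B r)ᴴ) (hB : ∀ r, B' r = (A r)ᴴ) (w : ℂ) :
    bloch R d V' A' B' (starRingEnd ℂ w)⁻¹ = (bloch R d V A B w)ᴴ := by
  simp only [bloch, conjTranspose_add, conjTranspose_sum, conjTranspose_smul, hV, hA, hB, inv_inv,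
    star_pow, star_inv₀, starRingEnd_apply]
  simp only [add_comm]

theorem conjReverse_charpoly_companion (hR : 1 ≤ R) (hV : V' = Vᴴ) (hA : ∀ r, A' r = (B r)ᴴ)
    (hB : ∀ r, B' r = (A r)ᴴ) (hAR : IsUnit (A R).det) (hAR' : IsUnit (A' R).det) (E : ℂ) :
    C (starRingEnd ℂ (A R).det) * conjReverse (companion R d V A B E).charpoly =
      C (A' R).det * (companion R d V' A' B' (starRingEnd ℂ E)).charpoly := by
  refine eq_of_infinite_eval_eq _ _ ((Set.finite_singleton 0).infinite_compl.mono fun v hv => ?_)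
  have hv : v ≠ 0 := hv
  set w := (starRingEnd ℂ v)⁻¹ with hw
  have hw_ne : w ≠ 0 := inv_ne_zero (star_ne_zero.mpr hv)
  have hconj : starRingEnd ℂ w = v⁻¹ := by rw [hw, map_inv₀, starRingEnd_self_apply]
  have hbloch : (bloch R d V' A' B' v).charpoly.eval (starRingEnd ℂ E) =
      starRingEnd ℂ ((bloch R d V A B w).charpoly.eval E) := by
    rw [← eval_map_apply, ← charpoly_conjTranspose, ← bloch_adjoint hV hA hB, hconj, inv_inv]
  have hpow : v ^ (2 * R * d) * (-v⁻¹ ^ R) ^ d = (-v ^ R) ^ d := by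
    rw [pow_mul, ← mul_pow, two_mul, pow_add, mul_neg, inv_pow,
      mul_inv_cancel_right₀ (pow_ne_zero _ hv)]
  rw [Set.mem_ofPred_eq, eval_C_mul, eval_C_mul, eval_conjReverse _ hv,
    natDegree_charpoly_companion, ← hw]
  calc starRingEnd ℂ (A R).det *
        (v ^ (2 * R * d) * starRingEnd ℂ ((companion R d V A B E).charpoly.eval w))
      = v ^ (2 * R * d) *
          starRingEnd ℂ ((A R).det * (companion R d V A B E).charpoly.eval w) := by
        rw [map_mul, mul_left_comm]
    _ = v ^ (2 * R * d) * (-v⁻¹ ^ R) ^ d *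
          starRingEnd ℂ ((bloch R d V A B w).charpoly.eval E) := by
        rw [det_mul_charpoly_companion_eval hR hAR E hw_ne, map_mul, map_pow, map_neg, map_pow,
          hconj, ← mul_assoc]
    _ = (A' R).det * (companion R d V' A' B' (starRingEnd ℂ E)).charpoly.eval v := by
        rw [hpow, ← hbloch, det_mul_charpoly_companion_eval hR hAR' _ hv]

theorem rootMultiplicity_charpoly_companion_adjoint (hR : 1 ≤ R) (hV : V' = Vᴴ)
    (hA : ∀ r, A' r = (B r)ᴴ) (hB : ∀ r, B' r = (A r)ᴴ) (hAR : IsUnit (A R).det)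
    (hAR' : IsUnit (A' R).det) (E : ℂ) {z : ℂ} (hz : z ≠ 0) :
    (companion R d V A B E).charpoly.rootMultiplicity z =
      (companion R d V' A' B' (starRingEnd ℂ E)).charpoly.rootMultiplicity
        (starRingEnd ℂ z)⁻¹ := by
  have hconj : starRingEnd ℂ (A R).det ≠ 0 := star_ne_zero.mpr hAR.ne_zero
  rw [← rootMultiplicity_conjReverse _ hz, ← rootMultiplicity_C_mul hconj,
    conjReverse_charpoly_companion hR hV hA hB hAR hAR', rootMultiplicity_C_mul hAR'.ne_zero]

theorem companion_eigenvalue_duality_general (hR : 1 ≤ R) (hV : V' = Vᴴ)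
    (hA : ∀ r, A' r = (B r)ᴴ) (hB : ∀ r, B' r = (A r)ᴴ) (hAR : IsUnit (A R).det)
    (hAR' : IsUnit (A' R).det) (E : ℂ) {z : ℂ} (hz : z ≠ 0) :
    (companion R d V A B E).charpoly.rootMultiplicity z =
        (companion R d V' A' B' (starRingEnd ℂ E)).charpoly.rootMultiplicity (starRingEnd ℂ z)⁻¹ ∧
      ((∃ x, x ≠ 0 ∧ companion R d V A B E *ᵥ x = z • x) ↔
        ∃ x, x ≠ 0 ∧
          companion R d V' A' B' (starRingEnd ℂ E) *ᵥ x = (starRingEnd ℂ z)⁻¹ • x) ∧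
      ((∃ x, x ≠ 0 ∧ companion R d V A B E *ᵥ x = z • x) →
        (∃ u, u ≠ 0 ∧ bloch R d V A B z *ᵥ u = E • u) ∧
        ∃ u, u ≠ 0 ∧ bloch R d V' A' B' (starRingEnd ℂ z)⁻¹ *ᵥ u = starRingEnd ℂ E • u) := by
  have hmult := rootMultiplicity_charpoly_companion_adjoint hR hV hA hB hAR hAR' E hz
  have hdual : (companion R d V A B E).charpoly.IsRoot z ↔
      (companion R d V' A' B' (starRingEnd ℂ E)).charpoly.IsRoot (starRingEnd ℂ z)⁻¹ := by
    rw [← rootMultiplicity_pos (charpoly_monic _).ne_zero, hmult,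
      rootMultiplicity_pos (charpoly_monic _).ne_zero]
  have hz' : (starRingEnd ℂ z)⁻¹ ≠ 0 := inv_ne_zero (star_ne_zero.mpr hz)
  simp only [exists_mulVec_eq_smul_iff_isRoot_charpoly]
  exact ⟨hmult, hdual, fun h => ⟨(isRoot_charpoly_companion_iff hR hAR E hz).mp h,
    (isRoot_charpoly_companion_iff hR hAR' _ hz').mp (hdual.mp h)⟩⟩

end Adjoint

end Bloch

theorem companion_eigenvalue_duality (R d : ℕ) (hR : 1 ≤ R) (hd : 1 ≤ d)
    (V : Matrix (Fin d) (Fin d) ℂ) (A B : ℕ → Matrix (Fin d) (Fin d) ℂ)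
    (hV : Vᴴ = V) (hB : ∀ r, B r = (A r)ᴴ) (hAR : IsUnit (A R).det)
    (E : ℝ) (z : ℂ) (hz : z ≠ 0) :
    (∀ m : ℕ, 1 ≤ m →
      ((Matrix.charpoly (companion R d V A B (E : ℂ))).rootMultiplicity z = m ↔
        (Matrix.charpoly (companion R d V A B (E : ℂ))).rootMultiplicity
          ((starRingEnd ℂ) z)⁻¹ = m)) ∧
    ((∃ x : Fin (2 * R) × Fin d → ℂ, x ≠ 0 ∧
        (companion R d V A B (E : ℂ)).mulVec x = z • x) ↔
      (∃ x : Fin (2 * R) × Fin d → ℂ, x ≠ 0 ∧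
        (companion R d V A B (E : ℂ)).mulVec x = ((starRingEnd ℂ) z)⁻¹ • x)) ∧
    ((∃ x : Fin (2 * R) × Fin d → ℂ, x ≠ 0 ∧
        (companion R d V A B (E : ℂ)).mulVec x = z • x) →
      (∃ u : Fin d → ℂ, u ≠ 0 ∧ (bloch R d V A B z).mulVec u = (E : ℂ) • u) ∧
      (∃ u : Fin d → ℂ, u ≠ 0 ∧
        (bloch R d V A B ((starRingEnd ℂ) z)⁻¹).mulVec u = (E : ℂ) • u)) := by
  have hA (r : ℕ) : A r = (B r)ᴴ := by rw [hB, conjTranspose_conjTranspose]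
  have h := companion_eigenvalue_duality_general hR hV.symm hA hB hAR hAR E hz
  rw [Complex.conj_ofReal] at h
  exact ⟨fun m _ => by rw [h.1], h.2⟩
end

section
/- Assume V = V*, B_r = A_r* for all r, A_R is invertible, and let E ∈ ℝ. If ψ : ℤ → ℂ^d is square-summable (Σ_{n∈ℤ} ‖ψₙ‖² < ∞) and satisfies V_E·ψₙ + Σ_{r=1}^R (A_r*·ψ_{n−r} + A_r·ψ_{n+r}) = 0 for all n ∈ ℤ, then ψ = 0. In other words, the self-adjoint bulk Hamiltonian with invertible top hopping term A_R has no point spectrum. -/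
/-!
STATEMENT 11.  A self-adjoint bulk Hamiltonian (`V = V*`, hoppings `A_r` with
`B_r = A_r*`) with `A_R` invertible has no point spectrum: if `ψ : ℤ → ℂ^d` is
square-summable and `V_E·ψₙ + ∑_{r=1}^R (A_r*·ψ_{n−r} + A_r·ψ_{n+r}) = 0` for all
`n ∈ ℤ` (i.e. `Hψ = Eψ` with `E ∈ ℝ`), then `ψ = 0`.
-/

open Matrix Finset

/-!
When the two extreme hoppings are injective, a solution on `ℤ` is determined by its values on a
window as long as the range of the recurrence, so the solutions form a finite-dimensional space,
and this space is invariant under translations.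

Finite dimensionality forces the topology of pointwise convergence on the solutions in `C₀(ℤ, X)`
to agree with the sup norm. The translates of such a solution tend to zero pointwise, hence in
norm; but translations are isometries, so the solution vanishes. Square-summable sequences lie in
`C₀(ℤ, X)`.
-/

open Filter Function Topology
open scoped ZeroAtInfty

section Translation

/-- Forgetting that a function is continuous and vanishes at infinity, as a linear map. -/
def zeroAtInftyCoeLinearMap (S G X : Type*) [Semiring S] [TopologicalSpace G] [TopologicalSpace X]
    [AddCommMonoid X] [ContinuousAdd X] [Module S X] [ContinuousConstSMul S X] :
    C₀(G, X) →ₗ[S] G → X where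
  toFun f := f
  map_add' _ _ := rfl
  map_smul' _ _ := rfl

variable {𝕜 G X : Type*} [NontriviallyNormedField 𝕜] [CompleteSpace 𝕜]
  [TopologicalSpace G] [AddGroup G] [SeparatelyContinuousAdd G] [NoncompactSpace G]
  [NormedAddCommGroup X] [NormedSpace 𝕜 X]

theorem eq_bot_of_finiteDimensional_of_translation_mem (W : Submodule 𝕜 C₀(G, X))
    [FiniteDimensional 𝕜 W]
    (hW : ∀ f ∈ W, ∀ g : G, f.comp (Homeomorph.addRight g).toCocompactMap ∈ W) : W = ⊥ := by
  refine (Submodule.eq_bot_iff W).2 fun f hf => ?_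
  let translate (g : G) : W := ⟨_, hW f hf g⟩
  let eval : W →ₗ[𝕜] G → X := zeroAtInftyCoeLinearMap 𝕜 G X ∘ₗ W.subtype
  have eval_injective : Injective eval := DFunLike.coe_injective.comp Subtype.val_injective
  have eval_embedding : IsClosedEmbedding eval :=
    LinearMap.isClosedEmbedding_of_injective (LinearMap.ker_eq_bot.2 eval_injective)
  have tendsto_pointwise : Tendsto (eval ∘ translate) (cocompact G) (𝓝 (eval 0)) :=
    tendsto_pi_nhds.2 fun x =>
      f.zero_at_infty'.comp (Homeomorph.addLeft x).isClosedEmbedding.tendsto_cocompact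
  have tendsto_norm : Tendsto (fun g => ‖translate g‖) (cocompact G) (𝓝 0) := by
    simpa using (eval_embedding.tendsto_nhds_iff.2 tendsto_pointwise).norm
  have norm_apply_le (x g : G) : ‖f x‖ ≤ ‖translate g‖ := by
    simpa [translate] using (translate g).1.toBCF.norm_coe_le_norm (x - g)
  ext x
  exact norm_le_zero_iff.1 (ge_of_tendsto' tendsto_norm (norm_apply_le x))

end Translation

section BandOperator

variable {S X : Type*}

/-- The translation-invariant operator `(Lψ)ₙ = ∑_{p ≤ j ≤ q} C_j ψ_{n+j}` on `X`-valued sequences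
over `ℤ`. Only the coefficients `C j` with `j ∈ Icc p q` matter. -/
noncomputable def bandOperator [Semiring S] [AddCommMonoid X] [Module S X] (p q : ℤ)
    (C : ℤ → Module.End S X) : Module.End S (ℤ → X) :=
  LinearMap.pi fun n => ∑ j ∈ Icc p q, C j ∘ₗ LinearMap.proj (n + j)

section Semiring

variable [Semiring S] [AddCommMonoid X] [Module S X] {p q : ℤ} {C : ℤ → Module.End S X}
  {ψ : ℤ → X}

theorem bandOperator_apply (p q : ℤ) (C : ℤ → Module.End S X) (ψ : ℤ → X) (n : ℤ) :
    bandOperator p q C ψ n = ∑ j ∈ Icc p q, C j (ψ (n + j)) := by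
  simp [bandOperator]

theorem comp_add_right_mem_ker_bandOperator (hψ : ψ ∈ (bandOperator p q C).ker) (m : ℤ) :
    (fun n => ψ (n + m)) ∈ (bandOperator p q C).ker := by
  ext n
  simpa only [bandOperator_apply, add_right_comm, Pi.zero_apply] using congrFun hψ (n + m)

theorem apply_add_eq_zero_of_mem_ker_bandOperator (hψ : ψ ∈ (bandOperator p q C).ker) {i : ℤ}
    (hi : i ∈ Icc p q) (hC : Injective (C i)) {n : ℤ}
    (hzero : ∀ j ∈ Icc p q, j ≠ i → ψ (n + j) = 0) : ψ (n + i) = 0 := by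
  have hn : ∑ j ∈ Icc p q, C j (ψ (n + j)) = 0 := by
    rw [← bandOperator_apply]
    exact congrFun hψ n
  rw [sum_eq_single_of_mem i hi fun j hj hji => by rw [hzero j hj hji, map_zero]] at hn
  exact (map_eq_zero_iff (C i) hC).1 hn

theorem eq_zero_of_mem_ker_bandOperator_of_window (hpq : p ≤ q) (hp : Injective (C p))
    (hq : Injective (C q)) (hψ : ψ ∈ (bandOperator p q C).ker)
    (hzero : ∀ n ∈ Ico p q, ψ n = 0) : ψ = 0 := by
  have right (k : ℕ) : ψ (p + k) = 0 := by
    induction k using Nat.strong_induction_on with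
    | _ k ih =>
      by_cases hk : p + k < q
      · exact hzero _ (mem_Ico.2 ⟨by lia, hk⟩)
      rw [show p + k = p + k - q + q by ring]
      refine apply_add_eq_zero_of_mem_ker_bandOperator hψ (right_mem_Icc.2 hpq) hq
        fun j hj hjq => ?_
      rw [mem_Icc] at hj
      convert ih (k - q + j).toNat (by lia) using 2
      lia
  have left (k : ℕ) : ψ (q - 1 - k) = 0 := by
    induction k using Nat.strong_induction_on with
    | _ k ih =>
      by_cases hk : p ≤ q - 1 - k
      · exact hzero _ (mem_Ico.2 ⟨hk, by lia⟩)
      rw [show q - 1 - k = q - 1 - k - p + p by ring]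
      refine apply_add_eq_zero_of_mem_ker_bandOperator hψ (left_mem_Icc.2 hpq) hp fun j hj hjp => ?_
      rw [mem_Icc] at hj
      convert ih (k + p - j).toNat (by lia) using 2
      lia
  ext n
  obtain hn | hn := le_or_gt p n
  · simpa [hn] using right (n - p).toNat
  · simpa [show n ≤ q - 1 by lia] using left (q - 1 - n).toNat

end Semiring

theorem isNoetherian_ker_bandOperator [Ring S] [AddCommGroup X] [Module S X] [IsNoetherian S X]
    {p q : ℤ} (hpq : p ≤ q) {C : ℤ → Module.End S X} (hp : Injective (C p))
    (hq : Injective (C q)) : IsNoetherian S (bandOperator p q C).ker := by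
  let restrict : (bandOperator p q C).ker →ₗ[S] (Ico p q → X) :=
    LinearMap.funLeft S X Subtype.val ∘ₗ Submodule.subtype _
  refine isNoetherian_of_injective restrict
    ((injective_iff_map_eq_zero restrict).2 fun ψ hψ => Subtype.ext ?_)
  exact eq_zero_of_mem_ker_bandOperator_of_window hpq hp hq ψ.2 fun n hn => congrFun hψ ⟨n, hn⟩

theorem eq_zero_of_mem_ker_bandOperator_of_tendsto {𝕜 : Type*}
    [NontriviallyNormedField 𝕜] [CompleteSpace 𝕜] [NormedAddCommGroup X] [NormedSpace 𝕜 X]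
    [FiniteDimensional 𝕜 X] {p q : ℤ} (hpq : p ≤ q) {C : ℤ → Module.End 𝕜 X}
    (hp : Injective (C p)) (hq : Injective (C q)) {ψ : ℤ → X}
    (hψ : ψ ∈ (bandOperator p q C).ker) (hlim : Tendsto ψ cofinite (𝓝 0)) : ψ = 0 := by
  let W : Submodule 𝕜 C₀(ℤ, X) := (bandOperator p q C).ker.comap (zeroAtInftyCoeLinearMap 𝕜 ℤ X)
  let toKer : W →ₗ[𝕜] (bandOperator p q C).ker :=
    (zeroAtInftyCoeLinearMap 𝕜 ℤ X).restrict fun _ hf => hf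
  have toKer_injective : Injective toKer := fun f g hfg =>
    Subtype.ext (DFunLike.coe_injective (congrArg Subtype.val hfg))
  have := isNoetherian_ker_bandOperator hpq hp hq
  have : FiniteDimensional 𝕜 W := .of_injective toKer toKer_injective
  have hW : W = ⊥ := eq_bot_of_finiteDimensional_of_translation_mem W fun f hf m =>
    comp_add_right_mem_ker_bandOperator hf m
  let f : C₀(ℤ, X) := ⟨⟨ψ, continuous_of_discreteTopology⟩, by rwa [cocompact_eq_cofinite]⟩
  have hf : f = 0 := (Submodule.eq_bot_iff W).1 hW f hψ
  exact congrArg DFunLike.coe hf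

end BandOperator

theorem sum_Icc_neg_self_eq_add_sum_Icc_one {M : Type*} [AddCommMonoid M] (f : ℤ → M) (N : ℕ) :
    ∑ j ∈ Icc (-N : ℤ) N, f j = f 0 + ∑ r ∈ Icc 1 N, (f (-r) + f r) := by
  induction N with
  | zero => simp
  | succ N ih =>
    rw [Nat.cast_succ, Finset.Icc_succ_succ, sum_union (by simp), ih, sum_Icc_succ_top (by lia),
      sum_pair (by lia), add_assoc, Nat.cast_succ]

theorem tendsto_cofinite_zero_of_summable_norm_sq {ι X : Type*} [SeminormedAddCommGroup X]
    {f : ι → X} (hf : Summable fun i => ‖f i‖ ^ 2) : Tendsto f cofinite (𝓝 0) :=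
  tendsto_zero_iff_norm_tendsto_zero.2 <| by simpa using hf.tendsto_cofinite_zero.sqrt

theorem bulk_hamiltonian_no_point_spectrum_general {𝕜 m : Type*} [NontriviallyNormedField 𝕜]
    [CompleteSpace 𝕜] [Fintype m] [DecidableEq m] {R : ℕ} (hR : 1 ≤ R) {M : Matrix m m 𝕜}
    {A B : ℕ → Matrix m m 𝕜} (hA : IsUnit (A R)) (hB : IsUnit (B R)) {ψ : ℤ → m → 𝕜}
    (hlim : Tendsto ψ cofinite (𝓝 0))
    (hrec : ∀ n : ℤ, M *ᵥ ψ n + ∑ r ∈ Icc 1 R, (B r *ᵥ ψ (n - r) + A r *ᵥ ψ (n + r)) = 0) :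
    ψ = 0 := by
  let C (j : ℤ) : Module.End 𝕜 (m → 𝕜) :=
    (if j = 0 then M else if 0 < j then A j.natAbs else B j.natAbs).mulVecLin
  have hC_neg : C (-R) = (B R).mulVecLin := by simp [C, show R ≠ 0 by lia, show ¬(R : ℤ) < 0 by lia]
  have hC_pos : C R = (A R).mulVecLin := by simp [C, show R ≠ 0 by lia, show 0 < R by lia]
  refine eq_zero_of_mem_ker_bandOperator_of_tendsto (C := C) (p := -R) (q := R) (by lia)
    (hC_neg ▸ mulVec_injective_of_isUnit hB) (hC_pos ▸ mulVec_injective_of_isUnit hA) ?_ hlim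
  ext1 n
  rw [bandOperator_apply, sum_Icc_neg_self_eq_add_sum_Icc_one, Pi.zero_apply, ← hrec n]
  congr 1
  · simp [C]
  refine sum_congr rfl fun r hr => ?_
  have hr : 0 < r := (mem_Icc.1 hr).1
  simp [C, hr, hr.ne', sub_eq_add_neg, show ¬(r : ℤ) < 0 by lia]

theorem bulk_hamiltonian_no_point_spectrum (R d : ℕ) (hR : 1 ≤ R) (hd : 1 ≤ d)
    (V : Matrix (Fin d) (Fin d) ℂ) (A : ℕ → Matrix (Fin d) (Fin d) ℂ)
    (hV : Vᴴ = V) (hAR : IsUnit (A R).det) (E : ℝ)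
    (ψ : ℤ → Fin d → ℂ)
    (hsum : Summable fun n : ℤ => ‖ψ n‖ ^ 2)
    (hrec : ∀ n : ℤ,
      (V - (E : ℂ) • (1 : Matrix (Fin d) (Fin d) ℂ)).mulVec (ψ n) +
        ∑ r ∈ Finset.Icc 1 R,
          ((A r)ᴴ.mulVec (ψ (n - (r : ℤ))) + (A r).mulVec (ψ (n + (r : ℤ)))) = 0) :
    ψ = 0 :=
  bulk_hamiltonian_no_point_spectrum_general hR ((isUnit_iff_isUnit_det _).2 hAR)
    ((isUnit_iff_isUnit_det _).2 hAR).star (tendsto_cofinite_zero_of_summable_norm_sq hsum) hrec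
end

section
/- Let t₁, t₂ ∈ ℝ with 0 < |t₁| < |t₂|. Set V := [[0, t₁],[t₁, 0]] and A := [[0, 0],[t₂, 0]] in M₂(ℂ), and define ψ₀ := 0 and ψₙ := ((−t₁/t₂)ⁿ, 0) ∈ ℂ² for n ≥ 1. Then ψ is nonzero, square-summable (Σₙ ‖ψₙ‖² < ∞), and satisfies A*·ψ_{n−1} + V·ψₙ + A·ψ_{n+1} = 0 for all n ≥ 1; that is, ψ is a zero-energy edge state of the half-space Su–Schrieffer–Heeger Hamiltonian, so 0 is an eigenvalue of that operator. -/
/-!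
STATEMENT 15.  The Su–Schrieffer–Heeger model with `0 < |t₁| < |t₂|`:
`V = [[0, t₁],[t₁, 0]]`, `A = [[0, 0],[t₂, 0]]`.  The sequence `ψ₀ = 0`,
`ψₙ = ((−t₁/t₂)ⁿ, 0)` for `n ≥ 1` is a nonzero, square-summable solution of
`A*·ψ_{n−1} + V·ψₙ + A·ψ_{n+1} = 0` (`n ≥ 1`), i.e. a zero-energy edge state of
the half-space Hamiltonian, so `0` is an eigenvalue of that operator.
-/

open Matrix

/-!
The geometric ansatz `ψₙ = zⁿ v` turns the bulk equation into `(z⁻¹A* + V + zA)v = E v`. At the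
boundary site `n = 1` the term `A*·ψ₀` is missing, so a single geometric mode extends to the half
space when `A*·v = 0` and `(V + zA)v = E v`; it is square-summable once `‖z‖ < 1`. In the SSH chain
`A` is singular and `v = (1, 0)` spans the kernel of `A*`; the remaining equation `t₁ + z t₂ = 0`
forces `z = -t₁/t₂`.
-/

/-- The geometric mode `n ↦ zⁿ v` on the physical sites `n ≥ 1`, extended by the Dirichlet value `0`
to site `0`; it is the ansatz for an edge state with decay factor `z` and internal vector `v`. -/
def geometricMode {R M : Type*} [Monoid R] [Zero M] [SMul R M] (z : R) (v : M) (n : ℕ) : M :=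
  if n = 0 then 0 else z ^ n • v

section Basic

variable {R M : Type*} [Monoid R] [Zero M]

theorem geometricMode_zero [SMul R M] (z : R) (v : M) : geometricMode z v 0 = 0 :=
  if_pos rfl

theorem geometricMode_of_ne_zero [SMul R M] (z : R) (v : M) {n : ℕ} (hn : n ≠ 0) :
    geometricMode z v n = z ^ n • v :=
  if_neg hn

theorem geometricMode_zero_right [SMulZeroClass R M] (z : R) (n : ℕ) :
    geometricMode z (0 : M) n = 0 := by
  rw [geometricMode, smul_zero, ite_self]

end Basic

theorem geometricMode_ne_zero {R M : Type*} [Ring R] [IsDomain R] [AddCommGroup M] [Module R M]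
    [Module.IsTorsionFree R M] {z : R} {v : M} (hz : z ≠ 0) (hv : v ≠ 0) :
    geometricMode z v ≠ 0 := by
  intro h
  have h_one : z ^ 1 • v = 0 := by
    rw [← geometricMode_of_ne_zero z v one_ne_zero, h, Pi.zero_apply]
  exact smul_ne_zero (pow_ne_zero 1 hz) hv h_one

theorem mulVec_geometricMode {R l m : Type*} [CommSemiring R] [Fintype m] (B : Matrix l m R)
    (z : R) (v : m → R) (n : ℕ) : B *ᵥ geometricMode z v n = geometricMode z (B *ᵥ v) n := by
  rcases eq_or_ne n 0 with rfl | hn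
  · rw [geometricMode_zero, geometricMode_zero, mulVec_zero]
  · rw [geometricMode_of_ne_zero z v hn, geometricMode_of_ne_zero z _ hn, mulVec_smul]

section Norm

variable {𝕜 F : Type*} [NormedField 𝕜] [SeminormedAddCommGroup F] [NormedSpace 𝕜 F]

theorem norm_geometricMode_le (z : 𝕜) (v : F) (n : ℕ) :
    ‖geometricMode z v n‖ ≤ ‖z‖ ^ n * ‖v‖ := by
  rcases eq_or_ne n 0 with rfl | hn
  · rw [geometricMode_zero, norm_zero]
    positivity
  · rw [geometricMode_of_ne_zero z v hn, norm_smul, norm_pow]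

theorem summable_norm_sq_geometricMode {z : 𝕜} (hz : ‖z‖ < 1) (v : F) :
    Summable fun n => ‖geometricMode z v n‖ ^ 2 := by
  have hz_sq : ‖z‖ ^ 2 < 1 := pow_lt_one₀ (norm_nonneg z) hz two_ne_zero
  refine Summable.of_nonneg_of_le (fun n => sq_nonneg _) (fun n => ?_)
    ((summable_geometric_of_lt_one (sq_nonneg ‖z‖) hz_sq).mul_right (‖v‖ ^ 2))
  calc
    ‖geometricMode z v n‖ ^ 2 ≤ (‖z‖ ^ n * ‖v‖) ^ 2 := by
      gcongr
      exact norm_geometricMode_le z v n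
    _ = (‖z‖ ^ 2) ^ n * ‖v‖ ^ 2 := by rw [mul_pow, pow_right_comm]

end Norm

/-- An edge state of energy `E` of the half-space Hamiltonian with on-site potential `V` and
right-hopping matrix `A`. Physical sites are numbered from `1`; site `0` carries the Dirichlet
condition. Since the internal space is finite-dimensional, the sup norm used here gives the same
square-summable sequences as the Euclidean norm. -/
structure IsEdgeState {𝕜 m : Type*} [NormedField 𝕜] [StarRing 𝕜] [Fintype m]
    (V A : Matrix m m 𝕜) (E : 𝕜) (ψ : ℕ → m → 𝕜) : Prop where
  dirichlet : ψ 0 = 0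
  ne_zero : ψ ≠ 0
  summable_norm_sq : Summable fun n => ‖ψ n‖ ^ 2
  eigen_eq : ∀ n : ℕ, 1 ≤ n → Aᴴ *ᵥ ψ (n - 1) + V *ᵥ ψ n + A *ᵥ ψ (n + 1) = E • ψ n

theorem geometricMode_eigen_eq {R m : Type*} [CommSemiring R] [StarRing R] [Fintype m]
    {V A : Matrix m m R} {E z : R} {v : m → R} (hA : Aᴴ *ᵥ v = 0)
    (hV : (V + z • A) *ᵥ v = E • v) {n : ℕ} (hn : n ≠ 0) :
    Aᴴ *ᵥ geometricMode z v (n - 1) + V *ᵥ geometricMode z v n + A *ᵥ geometricMode z v (n + 1) =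
      E • geometricMode z v n := by
  have hleft : Aᴴ *ᵥ geometricMode z v (n - 1) = 0 := by
    rw [mulVec_geometricMode, hA, geometricMode_zero_right]
  rw [hleft, zero_add, geometricMode_of_ne_zero z v hn,
    geometricMode_of_ne_zero z v n.succ_ne_zero]
  calc
    V *ᵥ (z ^ n • v) + A *ᵥ (z ^ (n + 1) • v) = z ^ n • ((V + z • A) *ᵥ v) := by
      rw [mulVec_smul, mulVec_smul, add_mulVec, smul_mulVec, smul_add, smul_smul, pow_succ]
    _ = E • z ^ n • v := by rw [hV, smul_comm]

theorem isEdgeState_geometricMode {𝕜 m : Type*} [NormedField 𝕜] [StarRing 𝕜] [Fintype m]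
    {V A : Matrix m m 𝕜} {E z : 𝕜} {v : m → 𝕜} (hz : z ≠ 0) (hz_lt_one : ‖z‖ < 1) (hv : v ≠ 0)
    (hA : Aᴴ *ᵥ v = 0) (hV : (V + z • A) *ᵥ v = E • v) :
    IsEdgeState V A E (geometricMode z v) where
  dirichlet := geometricMode_zero z v
  ne_zero := geometricMode_ne_zero hz hv
  summable_norm_sq := summable_norm_sq_geometricMode hz_lt_one v
  eigen_eq _ hn := geometricMode_eigen_eq hA hV (Nat.one_le_iff_ne_zero.mp hn)

theorem geometricMode_vec_one_zero {R : Type*} [MonoidWithZero R] (z : R) :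
    geometricMode z ![(1 : R), 0] = fun n => if n = 0 then 0 else ![z ^ n, 0] := by
  ext n
  simp only [geometricMode, smul_cons, smul_eq_mul, mul_one, mul_zero, smul_empty]

theorem ssh_hopping_conjTranspose_mulVec {R : Type*} [NonAssocSemiring R] [StarRing R] (t₂ : R) :
    !![0, 0; t₂, 0]ᴴ *ᵥ ![1, 0] = 0 := by
  ext i
  fin_cases i <;> simp [mulVec, vecHead, vecTail]

theorem ssh_onsite_add_smul_hopping_mulVec {R : Type*} [NonAssocSemiring R] {s t₁ t₂ z : R}
    (hz : t₁ + z * t₂ = 0) :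
    (!![0, s; t₁, 0] + z • !![0, 0; t₂, 0]) *ᵥ ![1, 0] = 0 := by
  ext i
  fin_cases i <;> simp [mulVec, vecHead, vecTail, hz]

theorem ssh_zero_energy_edge_state_general {𝕜 : Type*} [NormedField 𝕜] [StarRing 𝕜] {t₁ t₂ : 𝕜}
    (h1 : t₁ ≠ 0) (h2 : ‖t₁‖ < ‖t₂‖) :
    IsEdgeState !![0, star t₁; t₁, 0] !![0, 0; t₂, 0] 0 (geometricMode (-t₁ / t₂) ![1, 0]) := by
  have ht₂_pos : 0 < ‖t₂‖ := (norm_nonneg t₁).trans_lt h2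
  have ht₂ : t₂ ≠ 0 := norm_pos_iff.mp ht₂_pos
  have hdecay : ‖-t₁ / t₂‖ < 1 := by
    rwa [norm_div, norm_neg, div_lt_one ht₂_pos]
  have hbalance : t₁ + -t₁ / t₂ * t₂ = 0 := by
    rw [div_mul_cancel₀ _ ht₂, add_neg_cancel]
  have hv : (![1, 0] : Fin 2 → 𝕜) ≠ 0 := fun h => one_ne_zero (congrFun h 0)
  refine isEdgeState_geometricMode (div_ne_zero (neg_ne_zero.mpr h1) ht₂) hdecay hv
    (ssh_hopping_conjTranspose_mulVec t₂) ?_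
  rw [ssh_onsite_add_smul_hopping_mulVec hbalance, zero_smul]

theorem ssh_zero_energy_edge_state (t₁ t₂ : ℝ) (h1 : 0 < |t₁|) (h2 : |t₁| < |t₂|) :
    letI V : Matrix (Fin 2) (Fin 2) ℂ := !![0, (t₁ : ℂ); (t₁ : ℂ), 0]
    letI A : Matrix (Fin 2) (Fin 2) ℂ := !![0, 0; (t₂ : ℂ), 0]
    letI ψ : ℕ → Fin 2 → ℂ := fun n => if n = 0 then 0 else ![(-(t₁ : ℂ) / t₂) ^ n, 0]
    ψ ≠ 0 ∧ (Summable fun n => ‖ψ n‖ ^ 2) ∧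
      ∀ n : ℕ, 1 ≤ n →
        Aᴴ.mulVec (ψ (n - 1)) + V.mulVec (ψ n) + A.mulVec (ψ (n + 1)) = 0 := by
  have hedge := ssh_zero_energy_edge_state_general (𝕜 := ℂ) (t₁ := t₁) (t₂ := t₂)
    (Complex.ofReal_ne_zero.mpr (abs_pos.mp h1)) (by simpa using h2)
  rw [Complex.star_def, Complex.conj_ofReal, geometricMode_vec_one_zero] at hedge
  exact ⟨hedge.ne_zero, hedge.summable_norm_sq,
    fun n hn => (hedge.eigen_eq n hn).trans (zero_smul ℂ _)⟩
end

section
/- Let θ ∈ ℝ and set μ := −e^{−iθ}/2, V := [[0, 1],[1, 0]], and A := e^{iθ}·[[0, 1/4],[1, 0]] in M₂(ℂ). Define ψ₀ := 0 and ψₙ := (n·μ^{n−1}, 0) ∈ ℂ² for n ≥ 1. Then: (i) ψ is square-summable and satisfies A*·ψ_{n−1} + V·ψₙ + A·ψ_{n+1} = 0 for all n ≥ 1, so ψ is a zero-energy edge state of the half-space Hamiltonian Ȟ(V, A); and (ii) ψ is not a superposition of exponential ansatz modes: there exist no λ₁, λ₂, c₁, c₂ ∈ ℂ such that n·μ^{n−1}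 = c₁·λ₁ⁿ + c₂·λ₂ⁿ for all n ≥ 1. -/
/-!
STATEMENT 16.  For `θ ∈ ℝ`, `μ = −e^{−iθ}/2`, `V = [[0,1],[1,0]]`,
`A = e^{iθ}·[[0,1/4],[1,0]]`: the sequence `ψ₀ = 0`, `ψₙ = (n·μ^{n−1}, 0)` for
`n ≥ 1` is a square-summable zero-energy edge state of the half-space Hamiltonian
`Ȟ(V, A)`, and it is not a superposition of exponential-ansatz modes: no
`λ₁, λ₂, c₁, c₂ ∈ ℂ` satisfy `n·μ^{n−1} = c₁·λ₁ⁿ + c₂·λ₂ⁿ` for all `n ≥ 1`.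
-/

open Matrix

/-!
If a geometric sequence `n ↦ λⁿ • u` solves `Ȟψ = 0` in the bulk, then `P(λ) u = 0` for the pencil
`P(λ) = Aᴴ + λ V + λ² A`. At a double root `μ`, where also `P'(μ) u = 0`, differentiating `λⁿ • u`
in `λ` yields the further solution `n μⁿ⁻¹ • u`, which vanishes at the Dirichlet site `0` and decays
when `‖μ‖ < 1`.

If `n μⁿ⁻¹ • u = ∑ᵢ λᵢⁿ • cᵢ` for all `n ≥ 1`, then by linearity `p'(μ) • u = ∑ᵢ p(λᵢ) • cᵢ` for
every polynomial `p` divisible by `X`. Choosing `p` to vanish at every `λᵢ` and to have a simple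
root at `μ` makes the right side zero and the left side nonzero.
-/

/-- The derivative at `μ` of the exponential mode `l ↦ lⁿ • u`; truncated subtraction is harmless at
`n = 0`, where the factor `n` gives the Dirichlet value `0`. -/
def resonantMode {K M : Type*} [Semiring K] [AddCommMonoid M] [Module K M] (μ : K) (u : M) (n : ℕ) :
    M :=
  ((n : K) * μ ^ (n - 1)) • u

/-- A sequence is an exponential ansatz if it is a finite superposition of geometric modes `lⁿ • c`.
Agreement is required only at the physical sites `n ≥ 1`, since site `0` carries the Dirichlet
convention. -/
def IsExponentialAnsatz (K : Type*) {M : Type*} [Semiring K] [AddCommMonoid M] [Module K M]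
    (ψ : ℕ → M) : Prop :=
  ∃ (N : ℕ) (l : Fin N → K) (c : Fin N → M), ∀ n : ℕ, 1 ≤ n → ψ n = ∑ i, l i ^ n • c i

/-- Zero-energy edge states of the half-space Hamiltonian with on-site potential `V` and
right-hopping `A`. Square-summability is expressed with the sup norm on `m → ℂ`, which is equivalent
to the Euclidean one. -/
structure IsZeroEnergyEdgeState {m : Type*} [Fintype m] (V A : Matrix m m ℂ) (ψ : ℕ → m → ℂ) :
    Prop where
  dirichlet : ψ 0 = 0
  ne_zero : ψ ≠ 0
  summable : Summable fun n => ‖ψ n‖ ^ 2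
  equation : ∀ n : ℕ, 1 ≤ n →
    Aᴴ.mulVec (ψ (n - 1)) + V.mulVec (ψ n) + A.mulVec (ψ (n + 1)) = 0

section Ansatz

open Polynomial

theorem isExponentialAnsatz_resonantMode_of_eq_add {K M : Type*} [CommSemiring K]
    [AddCommMonoid M] [Module K M] {μ l₁ l₂ c₁ c₂ : K} (u : M)
    (h : ∀ n : ℕ, 1 ≤ n → (n : K) * μ ^ (n - 1) = c₁ * l₁ ^ n + c₂ * l₂ ^ n) :
    IsExponentialAnsatz K (resonantMode μ u) := by
  refine ⟨2, ![l₁, l₂], ![c₁ • u, c₂ • u], fun n hn => ?_⟩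
  simp [resonantMode, h n hn, add_smul, smul_smul, mul_comm]

theorem eval_derivative_smul_eq_sum_of_resonantMode_eq {K M ι : Type*} [CommSemiring K]
    [AddCommMonoid M] [Module K M] [Fintype ι] {μ : K} {u : M} {l : ι → K} {c : ι → M}
    (h : ∀ n : ℕ, 1 ≤ n → resonantMode μ u n = ∑ i, l i ^ n • c i) (p : K[X]) :
    (X * p).derivative.eval μ • u = ∑ i, (X * p).eval (l i) • c i := by
  induction p using Polynomial.induction_on' with
  | add p q hp hq =>
    simp only [mul_add, derivative_add, eval_add, add_smul, Finset.sum_add_distrib, hp, hq]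
  | monomial n a =>
    have hn : ((n + 1 : ℕ) * μ ^ n) • u = ∑ i, l i ^ (n + 1) • c i := h (n + 1) n.succ_pos
    simp only [X_mul_monomial, derivative_monomial, eval_monomial, Nat.add_sub_cancel, mul_smul,
      mul_assoc, ← Finset.smul_sum, ← hn]

variable {K : Type*} [CommRing K]

theorem eval_derivative_X_sub_C_mul (μ : K) (q : K[X]) :
    ((X - C μ) * q).derivative.eval μ = q.eval μ := by
  simp [derivative_mul]

theorem exists_simple_root_and_eval_eq_zero [IsDomain K] {μ : K} (hμ : μ ≠ 0) (s : Finset K) :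
    ∃ p : K[X], (X * p).derivative.eval μ ≠ 0 ∧ ∀ a ∈ s, (X * p).eval a = 0 := by
  classical
  let q : K[X] := ∏ a ∈ s.erase μ, (X - C a)
  refine ⟨(X - C μ) * q, ?_, fun a ha => ?_⟩
  · have hq : q.eval μ ≠ 0 := by
      simp only [q, eval_prod, eval_sub, eval_X, eval_C, Finset.prod_ne_zero_iff]
      exact fun a ha => sub_ne_zero.2 (Finset.ne_of_mem_erase ha).symm
    rw [mul_left_comm, eval_derivative_X_sub_C_mul, eval_mul, eval_X]
    exact mul_ne_zero hμ hq
  · rcases eq_or_ne a μ with rfl | haμ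
    · simp
    · have hq : q.eval a = 0 := by
        rw [eval_prod]
        exact Finset.prod_eq_zero (Finset.mem_erase.2 ⟨haμ, ha⟩) (by simp)
      simp [hq]

theorem not_isExponentialAnsatz_resonantMode [IsDomain K] {M : Type*} [AddCommGroup M] [Module K M]
    [Module.IsTorsionFree K M] {μ : K} {u : M} (hμ : μ ≠ 0) (hu : u ≠ 0) :
    ¬ IsExponentialAnsatz K (resonantMode μ u) := by
  classical
  rintro ⟨N, l, c, h⟩
  obtain ⟨p, hpμ, hpl⟩ := exists_simple_root_and_eval_eq_zero hμ (Finset.univ.image l)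
  refine smul_ne_zero hpμ hu ?_
  rw [eval_derivative_smul_eq_sum_of_resonantMode_eq h]
  exact Finset.sum_eq_zero fun i _ => by
    rw [hpl (l i) (Finset.mem_image_of_mem l (Finset.mem_univ i)), zero_smul]

end Ansatz

section EdgeState

theorem summable_pow_mul_geometric_pred {R : Type*} [NormedCommRing R] [CompleteSpace R] (k : ℕ)
    {r : R} (hr : ‖r‖ < 1) : Summable fun n : ℕ => (n : R) ^ k * r ^ (n - 1) := by
  rw [← summable_nat_add_iff 1]
  have hsum : Summable fun n : ℕ =>
      ∑ j ∈ Finset.range (k + 1), k.choose j * ((n : R) ^ j * r ^ n) :=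
    summable_sum fun j _ => (summable_pow_mul_geometric_of_norm_lt_one j hr).mul_left _
  refine hsum.congr fun n => ?_
  rw [Nat.add_sub_cancel, Nat.cast_add_one, add_pow, Finset.sum_mul]
  exact Finset.sum_congr rfl fun j _ => by ring

theorem summable_norm_resonantMode_sq {𝕜 E : Type*} [RCLike 𝕜] [SeminormedAddCommGroup E]
    [NormedSpace 𝕜 E] {μ : 𝕜} (hμ : ‖μ‖ < 1) (u : E) :
    Summable fun n => ‖resonantMode μ u n‖ ^ 2 := by
  have hμ_sq : ‖‖μ‖ ^ 2‖ < 1 := by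
    simpa using pow_lt_one₀ (norm_nonneg μ) hμ two_ne_zero
  refine ((summable_pow_mul_geometric_pred 2 hμ_sq).mul_right (‖u‖ ^ 2)).congr fun n => ?_
  rw [resonantMode, norm_smul, norm_mul, norm_pow, RCLike.norm_natCast]
  ring

theorem map_resonantMode_add_eq_zero {K M N : Type*} [CommRing K] [AddCommGroup M] [AddCommGroup N]
    [Module K M] [Module K N] {B V A : M →ₗ[K] N} {μ : K} {u : M}
    (hroot : B u + μ • V u + μ ^ 2 • A u = 0) (hderiv : V u + (2 * μ) • A u = 0) {n : ℕ}
    (hn : 1 ≤ n) :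
    B (resonantMode μ u (n - 1)) + V (resonantMode μ u n) + A (resonantMode μ u (n + 1)) = 0 := by
  simp only [resonantMode, map_smul]
  obtain _ | _ | n := n
  · contradiction
  · simpa [one_add_one_eq_two] using hderiv
  · calc
      _ = ((n + 1) * μ ^ n) • (B u + μ • V u + μ ^ 2 • A u)
          + μ ^ (n + 1) • (V u + (2 * μ) • A u) := by
        push_cast [Nat.add_sub_cancel]
        module
      _ = 0 := by rw [hroot, hderiv, smul_zero, smul_zero, add_zero]

theorem isZeroEnergyEdgeState_resonantMode {m : Type*} [Fintype m] {V A : Matrix m m ℂ} {μ : ℂ}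
    {u : m → ℂ} (hu : u ≠ 0) (hμ : ‖μ‖ < 1)
    (hroot : Aᴴ *ᵥ u + μ • V *ᵥ u + μ ^ 2 • A *ᵥ u = 0) (hderiv : V *ᵥ u + (2 * μ) • A *ᵥ u = 0) :
    IsZeroEnergyEdgeState V A (resonantMode μ u) where
  dirichlet := by simp [resonantMode]
  ne_zero h := hu (by simpa [resonantMode] using congrFun h 1)
  summable := summable_norm_resonantMode_sq hμ u
  equation _ hn :=
    map_resonantMode_add_eq_zero (B := Aᴴ.mulVecLin) (V := V.mulVecLin) (A := A.mulVecLin)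
      hroot hderiv hn

end EdgeState

section PhaseHopping

/-- The on-site potential of the example, the Pauli matrix `σₓ`, which swaps the two components. -/
def swapPotential : Matrix (Fin 2) (Fin 2) ℂ := !![0, 1; 1, 0]

/-- The right-hopping of the example, with the phase `exp (iθ)` replaced by an arbitrary `w`. -/
noncomputable def phaseHopping (w : ℂ) : Matrix (Fin 2) (Fin 2) ℂ := w • !![0, 1 / 4; 1, 0]

variable {w : ℂ}

theorem swapPotential_mulVec : swapPotential *ᵥ ![1, 0] = ![0, 1] := by
  simp [swapPotential, funext_iff, Fin.forall_fin_two, vecHead]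

theorem phaseHopping_mulVec (w : ℂ) : phaseHopping w *ᵥ ![1, 0] = ![0, w] := by
  simp [phaseHopping, funext_iff, Fin.forall_fin_two, vecHead]

theorem conjTranspose_phaseHopping_mulVec (hw : ‖w‖ = 1) :
    (phaseHopping w)ᴴ *ᵥ ![1, 0] = ![0, w⁻¹ / 4] := by
  simp [phaseHopping, Complex.inv_eq_conj hw, div_eq_mul_inv]

theorem phaseHopping_pencil_mulVec_eq_zero (hw : ‖w‖ = 1) :
    (phaseHopping w)ᴴ *ᵥ ![1, 0] + (-w⁻¹ / 2) • swapPotential *ᵥ ![1, 0]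
      + (-w⁻¹ / 2) ^ 2 • phaseHopping w *ᵥ ![1, 0] = 0 := by
  have hw_ne : w ≠ 0 := norm_ne_zero_iff.1 (hw ▸ one_ne_zero)
  have hroot : w⁻¹ / 4 + -w⁻¹ / 2 + (-w⁻¹ / 2) ^ 2 * w = 0 := by
    field_simp
    norm_num
  rw [conjTranspose_phaseHopping_mulVec hw, swapPotential_mulVec, phaseHopping_mulVec]
  simpa using hroot

theorem phaseHopping_pencil_deriv_mulVec_eq_zero (hw : w ≠ 0) :
    swapPotential *ᵥ ![1, 0] + (2 * (-w⁻¹ / 2)) • phaseHopping w *ᵥ ![1, 0] = 0 := by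
  have hderiv : 1 + 2 * (-w⁻¹ / 2) * w = 0 := by
    field_simp
    norm_num
  rw [swapPotential_mulVec, phaseHopping_mulVec]
  simpa using hderiv

theorem resonantMode_vec_one_zero {K : Type*} [Semiring K] (μ : K) (n : ℕ) :
    resonantMode μ ![(1 : K), 0] n = if n = 0 then 0 else ![(n : K) * μ ^ (n - 1), 0] := by
  rcases n with _ | n <;> simp [resonantMode]

end PhaseHopping

theorem edge_state_not_exponential_general {m : Type*} [Fintype m] {V A : Matrix m m ℂ} {μ : ℂ}
    {u : m → ℂ} (hu : u ≠ 0) (hμ_ne : μ ≠ 0) (hμ_lt : ‖μ‖ < 1)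
    (hroot : Aᴴ *ᵥ u + μ • V *ᵥ u + μ ^ 2 • A *ᵥ u = 0) (hderiv : V *ᵥ u + (2 * μ) • A *ᵥ u = 0) :
    IsZeroEnergyEdgeState V A (resonantMode μ u) ∧ ¬ IsExponentialAnsatz ℂ (resonantMode μ u) :=
  ⟨isZeroEnergyEdgeState_resonantMode hu hμ_lt hroot hderiv,
    not_isExponentialAnsatz_resonantMode hμ_ne hu⟩

theorem edge_state_not_exponential (θ : ℝ) :
    letI μ : ℂ := -Complex.exp (-(θ : ℂ) * Complex.I) / 2
    letI V : Matrix (Fin 2) (Fin 2) ℂ := !![0, 1; 1, 0]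
    letI A : Matrix (Fin 2) (Fin 2) ℂ :=
      Complex.exp ((θ : ℂ) * Complex.I) • !![0, 1 / 4; 1, 0]
    letI ψ : ℕ → Fin 2 → ℂ := fun n => if n = 0 then 0 else ![(n : ℂ) * μ ^ (n - 1), 0]
    (Summable fun n => ‖ψ n‖ ^ 2) ∧
    (∀ n : ℕ, 1 ≤ n →
      Aᴴ.mulVec (ψ (n - 1)) + V.mulVec (ψ n) + A.mulVec (ψ (n + 1)) = 0) ∧
    ¬ ∃ (l₁ l₂ c₁ c₂ : ℂ), ∀ n : ℕ, 1 ≤ n →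
        (n : ℂ) * μ ^ (n - 1) = c₁ * l₁ ^ n + c₂ * l₂ ^ n := by
  have hw : ‖Complex.exp ((θ : ℂ) * Complex.I)‖ = 1 := Complex.norm_exp_ofReal_mul_I θ
  obtain ⟨hedge, hansatz⟩ := edge_state_not_exponential_general (u := ![1, 0]) (by simp) (by simp)
    (by norm_num [hw]) (phaseHopping_pencil_mulVec_eq_zero hw)
    (phaseHopping_pencil_deriv_mulVec_eq_zero (Complex.exp_ne_zero _))
  simp only [neg_mul, Complex.exp_neg, ← resonantMode_vec_one_zero]
  exact ⟨hedge.summable, hedge.equation, fun ⟨_, _, _, _, h⟩ =>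
    hansatz (isExponentialAnsatz_resonantMode_of_eq_add ![1, 0] h)⟩
end
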